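/- If a vector x with strictly positive entries is p-larger than a vector y with strictly positive entries, then x reciprocally majorizes y, i.e., for each j = 1,...,n, the sum of reciprocals of the j smallest entries of x is at least the corresponding sum for y. -/

import Mathlib

open Finset

/-- Increasing rearrangement of a vector. -/
noncomputable def incSort {n : ℕ} (x : Fin n → ℝ) : Fin n → ℝ := x ∘ Tuple.sort x

/-- Product of the `j` smallest entries. -/
noncomputable def pprod {n : ℕ} (s : Fin n → ℝ) (j : ℕ) : ℝ :=
  ∏ i : Fin n, if (i : ℕ) < j then s i else 1

/-- Sum of reciprocals of the `j` smallest entries. -/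
noncomputable def rsum {n : ℕ} (s : Fin n → ℝ) (j : ℕ) : ℝ :=
  ∑ i : Fin n, if (i : ℕ) < j then 1 / s i else 0

/-- `x` is p-larger than `y`. -/
def PLarger {n : ℕ} (x y : Fin n → ℝ) : Prop :=
  ∀ j ≤ n, pprod (incSort x) j ≤ pprod (incSort y) j

/-- `x` reciprocally majorizes `y`. -/
def RecMajorizes {n : ℕ} (x y : Fin n → ℝ) : Prop :=
  ∀ j ≤ n, rsum (incSort y) j ≤ rsum (incSort x) j

/-!
In the logarithms of the entries, being `p`-larger is an inequality between partial sums, and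
`1 / a = exp (-log a)` is a convex antitone function of `log a`. The theorem is therefore a case of
the Tomić–Weyl inequality for convex antitone `f`: add up the tangent-line bounds
`f (v i) + f' (v i) * (u i - v i) ≤ f (u i)`, with `f'` the right derivative. When `v` increases,
the weights `-f' (v i)` are nonnegative and decreasing, so summation by parts reduces
`0 ≤ ∑ i, -f' (v i) * (v i - u i)` to the inequalities between the partial sums of `u` and `v`.
-/

section PartialSums

variable {ι : Type*} [LinearOrder ι] {s : Finset ι}

theorem mul_sum_le_sum_mul_of_antitoneOn {R : Type*} [Semiring R] [PartialOrder R]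
    [IsOrderedRing R] {w d : ι → R} {c : R} (hw : AntitoneOn w s) (hc : ∀ i ∈ s, c ≤ w i)
    (hd : ∀ k ∈ s, 0 ≤ ∑ i ∈ s with i ≤ k, d i) :
    c * ∑ i ∈ s, d i ≤ ∑ i ∈ s, w i * d i := by
  induction s using Finset.induction_on_max generalizing c with
  | empty => simp
  | insert m s hlt ih =>
    have hm : m ∉ s := fun h => (hlt m h).false
    have hms : m ∈ insert m s := mem_insert_self m s
    have htotal : 0 ≤ ∑ i ∈ insert m s, d i := by
      have hle : ∀ i ∈ insert m s, i ≤ m :=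
        (forall_mem_insert _ _ _).2 ⟨le_rfl, fun i hi => (hlt i hi).le⟩
      simpa only [filter_true_of_mem hle] using hd m hms
    have hprev : w m * ∑ i ∈ s, d i ≤ ∑ i ∈ s, w i * d i := by
      refine ih (hw.mono (by simp)) (fun i hi => hw (mem_insert_of_mem hi) hms (hlt i hi).le)
        fun k hk => ?_
      simpa only [filter_insert, (hlt k hk).not_ge, if_false] using hd k (mem_insert_of_mem hk)
    calc c * ∑ i ∈ insert m s, d i
        ≤ w m * ∑ i ∈ insert m s, d i := mul_le_mul_of_nonneg_right (hc m hms) htotal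
      _ = w m * d m + w m * ∑ i ∈ s, d i := by rw [sum_insert hm, mul_add]
      _ ≤ w m * d m + ∑ i ∈ s, w i * d i := by gcongr
      _ = ∑ i ∈ insert m s, w i * d i := by rw [sum_insert hm]

theorem add_rightDeriv_mul_sub_le_of_convexOn {S : Set ℝ} {f : ℝ → ℝ} {x y : ℝ}
    (hf : ConvexOn ℝ S f) (hx : x ∈ interior S) (hy : y ∈ S) :
    f x + derivWithin f (Set.Ioi x) x * (y - x) ≤ f y := by
  rcases lt_trichotomy x y with hxy | rfl | hyx
  · have hslope := hf.rightDeriv_le_slope_of_mem_interior hx hy hxy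
    rw [slope_def_field, le_div_iff₀ (sub_pos.2 hxy)] at hslope
    linarith
  · simp
  · have hslope := (hf.slope_le_leftDeriv_of_mem_interior hy hx hyx).trans
      (hf.leftDeriv_le_rightDeriv_of_mem_interior hx)
    rw [slope_def_field, div_le_iff₀ (sub_pos.2 hyx)] at hslope
    linarith

theorem sum_comp_le_sum_comp_of_convexOn_of_antitoneOn {S : Set ℝ} {f : ℝ → ℝ} {u v : ι → ℝ}
    (hf : ConvexOn ℝ S f) (hanti : AntitoneOn f S) (hu : ∀ i ∈ s, u i ∈ S)
    (hv : ∀ i ∈ s, v i ∈ interior S) (hmono : MonotoneOn v s)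
    (huv : ∀ k ∈ s, ∑ i ∈ s with i ≤ k, u i ≤ ∑ i ∈ s with i ≤ k, v i) :
    ∑ i ∈ s, f (v i) ≤ ∑ i ∈ s, f (u i) := by
  let f' : ℝ → ℝ := fun t => derivWithin f (Set.Ioi t) t
  have hf'_nonpos : ∀ t ∈ interior S, f' t ≤ 0 := fun t ht => by
    have hinter := derivWithin_inter (f := f) (s := Set.Ioi t) (mem_interior_iff_mem_nhds.1 ht)
    exact hinter.symm.trans_le (hanti.mono Set.inter_subset_right).derivWithin_nonpos
  have hweights : AntitoneOn (fun i => -f' (v i)) s := fun i hi k hk hik =>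
    neg_le_neg (hf.monotoneOn_rightDeriv (hv i hi) (hv k hk) (hmono hi hk hik))
  have habel : 0 ≤ ∑ i ∈ s, -f' (v i) * (v i - u i) := by
    simpa only [zero_mul] using mul_sum_le_sum_mul_of_antitoneOn hweights
      (fun i hi => neg_nonneg.2 (hf'_nonpos _ (hv i hi)))
      fun k hk => by simpa only [sum_sub_distrib, sub_nonneg] using huv k hk
  calc ∑ i ∈ s, f (v i)
      ≤ ∑ i ∈ s, f (v i) + ∑ i ∈ s, -f' (v i) * (v i - u i) := le_add_of_nonneg_right habel
    _ = ∑ i ∈ s, (f (v i) + f' (v i) * (u i - v i)) := by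
        rw [← sum_add_distrib]; exact sum_congr rfl fun i _ => by ring
    _ ≤ ∑ i ∈ s, f (u i) := sum_le_sum fun i hi =>
        add_rightDeriv_mul_sub_le_of_convexOn hf (hv i hi) (hu i hi)

theorem sum_one_div_le_sum_one_div_of_prod_le_prod {a b : ι → ℝ} (ha : ∀ i ∈ s, 0 < a i)
    (hb : ∀ i ∈ s, 0 < b i) (hmono : MonotoneOn b s)
    (hab : ∀ k ∈ s, ∏ i ∈ s with i ≤ k, a i ≤ ∏ i ∈ s with i ≤ k, b i) :
    ∑ i ∈ s, 1 / b i ≤ ∑ i ∈ s, 1 / a i := by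
  have hconvex : ConvexOn ℝ Set.univ fun t : ℝ => Real.exp (-t) :=
    convexOn_exp.comp_linearMap (-LinearMap.id)
  have hanti : Antitone fun t : ℝ => Real.exp (-t) := fun _ _ h => Real.exp_le_exp.2 (neg_le_neg h)
  have hexp : ∀ {c : ι → ℝ}, (∀ i ∈ s, 0 < c i) →
      ∑ i ∈ s, 1 / c i = ∑ i ∈ s, Real.exp (-Real.log (c i)) := fun hc =>
    sum_congr rfl fun i hi => by rw [Real.exp_neg, Real.exp_log (hc i hi), one_div]
  have hlog : ∀ {c : ι → ℝ}, (∀ i ∈ s, 0 < c i) → ∀ k,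
      ∑ i ∈ s with i ≤ k, Real.log (c i) = Real.log (∏ i ∈ s with i ≤ k, c i) := fun hc k =>
    (Real.log_prod fun i hi => (hc i (mem_of_mem_filter i hi)).ne').symm
  rw [hexp ha, hexp hb]
  refine sum_comp_le_sum_comp_of_convexOn_of_antitoneOn (f := fun t => Real.exp (-t)) hconvex
    (hanti.antitoneOn _) (fun _ _ => Set.mem_univ _)
    (fun _ _ => by simp only [interior_univ, Set.mem_univ])
    (fun i hi k hk hik => Real.log_le_log (hb i hi) (hmono hi hk hik)) fun k hk => ?_
  rw [hlog ha, hlog hb]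
  exact Real.log_le_log (prod_pos fun i hi => ha i (mem_of_mem_filter i hi)) (hab k hk)

end PartialSums

theorem pprod_eq_prod_filter {n : ℕ} (s : Fin n → ℝ) (j : ℕ) :
    pprod s j = ∏ i ∈ ({i | (i : ℕ) < j} : Finset (Fin n)), s i :=
  (prod_filter _ _).symm

theorem rsum_eq_sum_filter {n : ℕ} (s : Fin n → ℝ) (j : ℕ) :
    rsum s j = ∑ i ∈ ({i | (i : ℕ) < j} : Finset (Fin n)), 1 / s i :=
  (sum_filter _ _).symm

theorem prod_filter_le_eq_pprod {n j : ℕ} (s : Fin n → ℝ) {k : Fin n} (hk : (k : ℕ) < j) :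
    ∏ i ∈ ({i | (i : ℕ) < j} : Finset (Fin n)) with i ≤ k, s i = pprod s (k + 1) := by
  rw [pprod_eq_prod_filter, filter_filter]
  refine prod_congr (filter_congr fun i _ => ?_) fun _ _ => rfl
  rw [Fin.le_def]
  lia

theorem plarger_implies_rec_majorizes {n : ℕ} (x y : Fin n → ℝ)
    (hx : ∀ i, 0 < x i) (hy : ∀ i, 0 < y i)
    (h : PLarger x y) : RecMajorizes x y := by
  intro j _
  rw [rsum_eq_sum_filter, rsum_eq_sum_filter]
  refine sum_one_div_le_sum_one_div_of_prod_le_prod (fun i _ => hx _) (fun i _ => hy _)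
    ((Tuple.monotone_sort y).monotoneOn _) fun k hk => ?_
  have hkj : (k : ℕ) < j := (mem_filter.1 hk).2
  rw [prod_filter_le_eq_pprod _ hkj, prod_filter_le_eq_pprod _ hkj]
  exact h (k + 1) k.isLt
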